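/- For each natural number n let φₙ = (⊞ⁿ(p)) ⊞ q, where p and q are distinct propositional variables. Then for all i ≠ j, {φᵢ} ⊬_⊞ φⱼ. Consequently, the interderivability relation ⊣⊢_⊞ partitions the set of formulas in the two variables {p,q} into infinitely many equivalence classes. -/

import Mathlib

/-- Formulas built from countably many propositional variables with a single
binary connective `⊞` (platypus). -/
inductive Fm : Type where
  | var : ℕ → Fm
  | pl : Fm → Fm → Fm
deriving DecidableEq

namespace Fm

/-- The set of propositional variables occurring in a formula. -/
def vars : Fm → Set ℕ
  | var n => {n}
  | pl a b => vars a ∪ vars b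

/-- A `𝔅_⊞`-valuation: a two-valued function such that
`v (φ ⊞ ψ) ∈ {min (v φ) (v ψ), max (v φ) (v ψ)}`. -/
def IsVal (v : Fm → Bool) : Prop :=
  ∀ a b : Fm, v (a.pl b) = (v a && v b) ∨ v (a.pl b) = (v a || v b)

/-- The multiple-conclusion consequence `Γ ⊩_⊞ Δ`. -/
def Mc (Γ Δ : Set Fm) : Prop :=
  ∀ v : Fm → Bool, IsVal v → (∀ φ ∈ Γ, v φ = true) → ∃ ψ ∈ Δ, v ψ = true

/-- The single-conclusion consequence `Γ ⊢_⊞ φ`. -/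
def Sc (Γ : Set Fm) (φ : Fm) : Prop := Mc Γ {φ}

end Fm

namespace Fm

/-- Iterated platypus: `⊞⁰(φ) = φ`, `⊞^{n+1}(φ) = (⊞ⁿ(φ)) ⊞ φ`. -/
def iter (φ : Fm) : ℕ → Fm
  | 0 => φ
  | n + 1 => (iter φ n).pl φ

end Fm

/-!
For `i ≠ j` the formulas `φᵢ` and `φⱼ` are distinct compounds, so a valuation may choose `max` at
`φᵢ` and `min` at `φⱼ`. If moreover `p` is true and `q` is false, then every `⊞ⁿ(p)` is true, hence
`φᵢ` is true and `φⱼ` is false.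
-/

namespace Fm

variable {φ ψ χ : Fm} {v : Fm → Bool}

theorem IsVal.apply_pl_of_apply_eq {b : Bool} (hv : IsVal v) (hφ : v φ = b) (hψ : v ψ = b) :
    v (φ.pl ψ) = b := by
  rcases hv φ ψ with h | h <;> simp [h, hφ, hψ]

theorem IsVal.apply_eq_of_forall_vars {b : Bool} (hv : IsVal v)
    (h : ∀ n ∈ φ.vars, v (var n) = b) : v φ = b := by
  induction φ with
  | var n => exact h n rfl
  | pl φ ψ ihφ ihψ =>
    exact hv.apply_pl_of_apply_eq (ihφ fun n hn => h n (Or.inl hn))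
      (ihψ fun n hn => h n (Or.inr hn))

/-- The valuation extending the assignment `s` that evaluates the compound formula `χ` as a
disjunction and every other compound formula as a conjunction; it serves to refute inferences from
`χ`. If `χ` is a variable, all compounds are conjunctions. -/
def disjValAt (s : ℕ → Bool) (χ : Fm) : Fm → Bool
  | var n => s n
  | pl φ ψ =>
    if φ.pl ψ = χ then disjValAt s χ φ || disjValAt s χ ψ
    else disjValAt s χ φ && disjValAt s χ ψ

theorem disjValAt_pl_self (s : ℕ → Bool) (φ ψ : Fm) :
    disjValAt s (φ.pl ψ) (φ.pl ψ) =
      (disjValAt s (φ.pl ψ) φ || disjValAt s (φ.pl ψ) ψ) :=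
  if_pos rfl

theorem disjValAt_pl_of_ne (s : ℕ → Bool) (h : φ.pl ψ ≠ χ) :
    disjValAt s χ (φ.pl ψ) = (disjValAt s χ φ && disjValAt s χ ψ) :=
  if_neg h

theorem isVal_disjValAt (s : ℕ → Bool) (χ : Fm) : IsVal (disjValAt s χ) := by
  intro φ ψ
  by_cases h : φ.pl ψ = χ
  · subst h
    exact Or.inr (disjValAt_pl_self s φ ψ)
  · exact Or.inl (disjValAt_pl_of_ne s h)

theorem sc_singleton_iff :
    Sc {φ} ψ ↔ ∀ v : Fm → Bool, IsVal v → v φ = true → v ψ = true := by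
  simp [Sc, Mc]

theorem equivalence_sc_and_sc : Equivalence fun φ ψ : Fm => Sc {φ} ψ ∧ Sc {ψ} φ := by
  simp only [sc_singleton_iff]
  exact
    { refl := fun _ => ⟨fun _ _ h => h, fun _ _ h => h⟩
      symm := And.symm
      trans := fun h₁ h₂ =>
        ⟨fun v hv h => h₂.1 v hv (h₁.1 v hv h), fun v hv h => h₁.2 v hv (h₂.2 v hv h)⟩ }

theorem not_sc_pl_var_of_ne {q : ℕ} (hq : q ∉ φ.vars) (hne : φ ≠ ψ) :
    ¬ Sc {φ.pl (var q)} (ψ.pl (var q)) := by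
  let v := disjValAt (fun n => decide (n ≠ q)) (φ.pl (var q))
  have hv : IsVal v := isVal_disjValAt _ _
  have hv_q : v (var q) = false := decide_eq_false (not_not_intro rfl)
  have hv_φ : v φ = true :=
    hv.apply_eq_of_forall_vars fun n hn => decide_eq_true (ne_of_mem_of_not_mem hn hq)
  have hv_premise : v (φ.pl (var q)) = true :=
    (disjValAt_pl_self _ _ _).trans (Bool.or_eq_true_iff.mpr (Or.inl hv_φ))
  have hv_conclusion : v (ψ.pl (var q)) = false :=
    (disjValAt_pl_of_ne _ fun h => hne (pl.inj h).1.symm).trans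
      (Bool.and_eq_false_iff.mpr (Or.inr hv_q))
  intro h
  exact Bool.false_ne_true (hv_conclusion.symm.trans (sc_singleton_iff.mp h v hv hv_premise))

theorem iter_injective (φ : Fm) : Function.Injective φ.iter := by
  have size_strictMono : StrictMono fun n => sizeOf (φ.iter n) := by
    refine strictMono_nat_of_lt_succ fun n => ?_
    simp only [iter, pl.sizeOf_spec]
    omega
  exact fun i j h => size_strictMono.injective (congrArg sizeOf h)

theorem vars_iter (φ : Fm) (n : ℕ) : (φ.iter n).vars = φ.vars := by
  induction n with
  | zero => rfl
  | succ n ih => rw [iter, vars, ih, Set.union_self]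

end Fm

open Fm in
/-- with `φₙ = (⊞ⁿ p) ⊞ q` for distinct variables `p, q`, we have
`{φᵢ} ⊬_⊞ φⱼ` whenever `i ≠ j`; consequently interderivability `⊣⊢_⊞` has
infinitely many equivalence classes on the formulas in the variables `{p, q}`. -/
theorem platypus_infinitely_many_classes (p q : ℕ) (hpq : p ≠ q) :
    (∀ i j : ℕ, i ≠ j →
      ¬ Sc {((Fm.var p).iter i).pl (Fm.var q)} (((Fm.var p).iter j).pl (Fm.var q))) ∧
    Infinite (Quot (fun φ ψ : {φ : Fm // φ.vars ⊆ {p, q}} =>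
      Sc {φ.1} ψ.1 ∧ Sc {ψ.1} φ.1)) := by
  have not_sc : ∀ i j : ℕ, i ≠ j →
      ¬ Sc {((Fm.var p).iter i).pl (Fm.var q)} (((Fm.var p).iter j).pl (Fm.var q)) := by
    intro i j hij
    have hq : q ∉ ((Fm.var p).iter i).vars := by
      rw [vars_iter]
      exact hpq.symm
    exact not_sc_pl_var_of_ne hq ((iter_injective _).ne hij)
  have vars_subset (n : ℕ) : (((Fm.var p).iter n).pl (Fm.var q)).vars ⊆ {p, q} := by
    rw [vars, vars_iter]
    exact subset_rfl
  refine ⟨not_sc, Infinite.of_injective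
    (fun n => Quot.mk _ ⟨((Fm.var p).iter n).pl (Fm.var q), vars_subset n⟩) fun i j hij => ?_⟩
  by_contra hne
  exact not_sc i j hne (((equivalence_sc_and_sc.comap Subtype.val).quot_mk_eq_iff _ _).mp hij).1
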